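/- Let α_n be an optimal set of n-means for P with index set O_n = {σ : S_σ(2/3) ∈ α_n}, and let τ ∈ O_n maximize P(J_τ)·λ(J_τ)² over O_n. Then the set α_{n+1}(τ) := {S_σ(2/3) : σ ∈ O_n \ {τ}} ∪ {S_{τ1}(2/3), S_{τ2}(2/3)} is an optimal set of (n+1)-means for P. -/

import Mathlib

open MeasureTheory Set
open scoped ENNReal Classical

noncomputable section

/-- The similarity map `S₁(x) = x/4`. -/
def S1 (x : ℝ) : ℝ := x / 4

/-- The similarity map `S₂(x) = x/2 + 1/2`. -/
def S2 (x : ℝ) : ℝ := x / 2 + 1 / 2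

/-- `P` satisfies the self-similarity relation `P = (1/4)·P∘S₁⁻¹ + (3/4)·P∘S₂⁻¹`. -/
def SelfSimilar (P : Measure ℝ) : Prop :=
  P = (1/4 : ℝ≥0∞) • P.map S1 + (3/4 : ℝ≥0∞) • P.map S2

/-- For a word `σ` over `{1,2}` (encoded as `Fin 2`, `0 ↦ S₁`, `1 ↦ S₂`),
the composition `S_σ = S_{σ₁} ∘ ⋯ ∘ S_{σ_k}`. -/
def Sw : List (Fin 2) → ℝ → ℝ
  | [] => id
  | i :: σ => (if i = 0 then S1 else S2) ∘ Sw σ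

/-- `p_σ`, the product of the probabilities `p₁ = 1/4`, `p₂ = 3/4` along `σ`. -/
def pw : List (Fin 2) → ℝ
  | [] => 1
  | i :: σ => (if i = 0 then (1:ℝ)/4 else 3/4) * pw σ

/-- `s_σ`, the product of the contraction ratios `s₁ = 1/4`, `s₂ = 1/2` along `σ`. -/
def sw : List (Fin 2) → ℝ
  | [] => 1
  | i :: σ => (if i = 0 then (1:ℝ)/4 else 1/2) * sw σ

/-- `c(σ)`, the number of occurrences of the symbol `1` (encoded `0`) in `σ`. -/
def cnt (σ : List (Fin 2)) : ℕ := σ.count 0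

/-- The cylinder interval `J_σ = S_σ([0,1])`. -/
def J (σ : List (Fin 2)) : Set ℝ := Sw σ '' Set.Icc 0 1

/-- The distortion error `V(P;α) = ∫ min_{a ∈ α} (x-a)² dP`. -/
def distortion (P : Measure ℝ) (α : Finset ℝ) : ℝ :=
  ∫ x, sInf ((fun a => (x - a) ^ 2) '' (α : Set ℝ)) ∂P

/-- The `n`-th quantization error `V_n`. -/
def qError (P : Measure ℝ) (n : ℕ) : ℝ :=
  sInf {e | ∃ α : Finset ℝ, α.Nonempty ∧ α.card ≤ n ∧ e = distortion P α}

/-- `α` is an optimal set of `n`-means for `P`. -/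
def IsOptimal (P : Measure ℝ) (n : ℕ) (α : Finset ℝ) : Prop :=
  α.Nonempty ∧ α.card ≤ n ∧ distortion P α = qError P n

/-- `q_σ := P(J_σ) · λ(J_σ)²`. -/
def qnt (P : Measure ℝ) (σ : List (Fin 2)) : ℝ :=
  (P (J σ)).toReal * ((volume (J σ)).toReal) ^ 2

/-!
A finite complete prefix code over `{0, 1}`, i.e. a finite full binary tree `t`, partitions the
support of `P` into cylinders; the conditional means of these cylinders have distortion at most
`V · cost t`, where `V = 16/153` is the variance of `P` and `cost t = ∑ p_σ s_σ²` over the leaves.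
Conversely every set of `n` points has distortion at least `V · cost t` for some tree with `n`
leaves, with equality only if it is the set of centers of that tree. This goes by induction on `n`:
if the midpoint of two consecutive points lies in the gap `[1/4, 1/2]` between `J₁` and `J₂`, the
set splits into two smaller ones by self-similarity; otherwise a single point is nearest to the
whole gap, and direct estimates leave a distortion strictly above the cost of an explicit tree.

Hence optimal sets are exactly the centers of trees of minimal cost. Splitting the leaf `τ` lowers
the cost by the fixed proportion `1 - 1/64 - 3/16` of `q_τ`, and no tree with one more leaf does
better than splitting a leaf of largest `q`: such a tree refines some leaf of the minimal one, so
merging two of its leaves below that leaf raises the cost by at most the same amount.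
-/

/-! ### Code trees -/

/-- A finite full binary tree, standing for a complete prefix code over `Fin 2`: the words read
along its branches index a partition of the support of `P` into cylinder sets. -/
inductive CodeTree : Type
  | leaf : CodeTree
  | node (l r : CodeTree) : CodeTree

namespace CodeTree

/-- The number of leaves, i.e. of code words. -/
def numLeaves : CodeTree → ℕ
  | leaf => 1
  | node l r => l.numLeaves + r.numLeaves

/-- The code words, read from the root to the leaves. -/
def words : CodeTree → Finset (List (Fin 2))
  | leaf => {[]}
  | node l r => l.words.image (List.cons 0) ∪ r.words.image (List.cons 1)

/-- The sum over the code words `σ` of their weights `w σ₁ ⋯ w σₖ`, in recursive form. -/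
def cost (w : Fin 2 → ℝ) : CodeTree → ℝ
  | leaf => 1
  | node l r => w 0 * l.cost w + w 1 * r.cost w

lemma numLeaves_pos (t : CodeTree) : 0 < t.numLeaves := by
  induction t with
  | leaf => exact Nat.one_pos
  | node l r ihl _ => exact Nat.add_pos_left ihl _

lemma eq_leaf_of_numLeaves_le_one {t : CodeTree} (h : t.numLeaves ≤ 1) : t = leaf := by
  cases t with
  | leaf => rfl
  | node l r =>
    have := l.numLeaves_pos
    have := r.numLeaves_pos
    simp only [numLeaves] at h
    omega

lemma eq_node_leaf_leaf_of_numLeaves_eq_two {t : CodeTree} (h : t.numLeaves = 2) :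
    t = node leaf leaf := by
  cases t with
  | leaf => simp [numLeaves] at h
  | node l r =>
    have := l.numLeaves_pos
    have := r.numLeaves_pos
    simp only [numLeaves] at h
    rw [eq_leaf_of_numLeaves_le_one (t := l) (by omega),
      eq_leaf_of_numLeaves_le_one (t := r) (by omega)]

lemma words_nonempty (t : CodeTree) : t.words.Nonempty := by
  induction t with
  | leaf => exact Finset.singleton_nonempty _
  | node l r ihl _ => exact (ihl.image _).mono Finset.subset_union_left

lemma card_words_le (t : CodeTree) : t.words.card ≤ t.numLeaves := by
  induction t with
  | leaf => simp [words, numLeaves]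
  | node l r ihl ihr =>
    exact (Finset.card_union_le _ _).trans (Nat.add_le_add
      (Finset.card_image_le.trans ihl) (Finset.card_image_le.trans ihr))

/-- The points `S_σ(2/3)`, the conditional means of `P` on the cylinders `J_σ`, for `σ` a code
word. -/
def centers (t : CodeTree) : Finset ℝ := t.words.image (fun σ => Sw σ (2 / 3))

lemma centers_nonempty (t : CodeTree) : t.centers.Nonempty := t.words_nonempty.image _

lemma card_centers_le (t : CodeTree) : t.centers.card ≤ t.numLeaves :=
  Finset.card_image_le.trans t.card_words_le

lemma centers_leaf : leaf.centers = {2 / 3} := by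
  simp [centers, words, Sw]

lemma centers_node (l r : CodeTree) :
    (node l r).centers = l.centers.image S1 ∪ r.centers.image S2 := by
  simp [centers, words, Finset.image_union, Finset.image_image, Function.comp_def, Sw]

section Weights

variable {w : Fin 2 → ℝ}

lemma exists_split_leaf (w : Fin 2 → ℝ) (t : CodeTree) {τ : List (Fin 2)} (hτ : τ ∈ t.words) :
    ∃ t' : CodeTree, t'.numLeaves = t.numLeaves + 1 ∧
      t'.cost w = t.cost w - (1 - w 0 - w 1) * (τ.map w).prod ∧
      t'.words = t.words.erase τ ∪ {τ ++ [0], τ ++ [1]} := by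
  induction t generalizing τ with
  | leaf =>
    obtain rfl : τ = [] := by simpa [words] using hτ
    exact ⟨node leaf leaf, rfl, by simp [cost]; ring, by simp [words]⟩
  | node l r ihl ihr =>
    simp only [words, Finset.mem_union, Finset.mem_image] at hτ
    rcases hτ with ⟨τ, hτ, rfl⟩ | ⟨τ, hτ, rfl⟩
    · obtain ⟨l', hsize, hcost, hwords⟩ := ihl hτ
      refine ⟨node l' r, by simp only [numLeaves, hsize]; omega, by simp [cost, hcost]; ring, ?_⟩
      ext (_ | ⟨i, σ⟩)
      · simp [words]
      · fin_cases i <;> simp [words, hwords]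
    · obtain ⟨r', hsize, hcost, hwords⟩ := ihr hτ
      refine ⟨node l r', by simp only [numLeaves, hsize]; omega, by simp [cost, hcost]; ring, ?_⟩
      ext (_ | ⟨i, σ⟩)
      · simp [words]
      · fin_cases i <;> simp [words, hwords]

lemma exists_merge_leaves (hw : ∀ i, 0 ≤ w i) (hw' : w 0 + w 1 ≤ 1) (t : CodeTree)
    (ht : 2 ≤ t.numLeaves) :
    ∃ t' : CodeTree, t'.numLeaves + 1 = t.numLeaves ∧ t'.cost w ≤ t.cost w + (1 - w 0 - w 1) := by
  induction t with
  | leaf => simp [numLeaves] at ht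
  | node l r ihl ihr =>
    have h0 := hw 0
    have h1 := hw 1
    rcases Nat.lt_or_ge l.numLeaves 2 with hl | hl
    · rcases Nat.lt_or_ge r.numLeaves 2 with hr | hr
      · rw [eq_leaf_of_numLeaves_le_one (Nat.le_of_lt_succ hl),
          eq_leaf_of_numLeaves_le_one (Nat.le_of_lt_succ hr)]
        exact ⟨leaf, rfl, by simp only [cost]; linarith⟩
      · obtain ⟨r', hsize, hcost⟩ := ihr hr
        exact ⟨node l r', by simp only [numLeaves]; omega, by simp only [cost]; nlinarith⟩
    · obtain ⟨l', hsize, hcost⟩ := ihl hl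
      exact ⟨node l' r, by simp only [numLeaves]; omega, by simp only [cost]; nlinarith⟩

-- Having more leaves than `t`, the tree `s` refines some leaf of `t`; two leaves of `s` below that
-- leaf are merged.
lemma exists_cost_le_add_of_numLeaves_lt (hw : ∀ i, 0 < w i) (hw' : w 0 + w 1 ≤ 1)
    (t s : CodeTree) {M : ℝ} (hM : ∀ σ ∈ t.words, (σ.map w).prod ≤ M)
    (hlt : t.numLeaves < s.numLeaves) :
    ∃ s' : CodeTree, s'.numLeaves + 1 = s.numLeaves ∧
      s'.cost w ≤ s.cost w + (1 - w 0 - w 1) * M := by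
  induction t generalizing s M with
  | leaf =>
    have hM1 : 1 ≤ M := by simpa using hM [] (by simp [words])
    obtain ⟨s', hsize, hcost⟩ := exists_merge_leaves (fun i => (hw i).le) hw' s hlt
    exact ⟨s', hsize, by nlinarith⟩
  | node l r ihl ihr =>
    cases s with
    | leaf =>
      have := l.numLeaves_pos
      simp only [numLeaves] at hlt
      omega
    | node a b =>
      have hrescale (i : Fin 2) (t : CodeTree) (ht : ∀ σ ∈ t.words, i :: σ ∈ (node l r).words) :
          ∀ σ ∈ t.words, (σ.map w).prod ≤ M / w i := fun σ hσ => by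
        rw [le_div_iff₀' (hw i)]
        simpa using hM _ (ht σ hσ)
      have hcancel (i : Fin 2) : w i * (M / w i) = M := mul_div_cancel₀ M (hw i).ne'
      simp only [numLeaves] at hlt
      rcases Nat.lt_or_ge l.numLeaves a.numLeaves with hla | hla
      · obtain ⟨a', hsize, hcost⟩ :=
          ihl a (hrescale 0 l fun σ hσ => by simp [words, hσ]) hla
        refine ⟨node a' b, by simp only [numLeaves]; omega, ?_⟩
        have := mul_le_mul_of_nonneg_left hcost (hw 0).le
        simp only [cost]
        linear_combination this + (1 - w 0 - w 1) * hcancel 0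
      · obtain ⟨b', hsize, hcost⟩ :=
          ihr b (hrescale 1 r fun σ hσ => by simp [words, hσ]) (by omega)
        refine ⟨node a b', by simp only [numLeaves]; omega, ?_⟩
        have := mul_le_mul_of_nonneg_left hcost (hw 1).le
        simp only [cost]
        linear_combination this + (1 - w 0 - w 1) * hcancel 1

lemma cost_sub_le_of_forall_cost_le (hw : ∀ i, 0 < w i) (hw' : w 0 + w 1 ≤ 1) {t : CodeTree}
    (hmin : ∀ s : CodeTree, s.numLeaves = t.numLeaves → t.cost w ≤ s.cost w) {M : ℝ}
    (hM : ∀ σ ∈ t.words, (σ.map w).prod ≤ M) {s : CodeTree}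
    (hs : s.numLeaves = t.numLeaves + 1) : t.cost w - (1 - w 0 - w 1) * M ≤ s.cost w := by
  obtain ⟨s', hsize, hcost⟩ := exists_cost_le_add_of_numLeaves_lt hw hw' t s hM (by omega)
  linarith [hmin s' (by omega)]

lemma exists_numLeaves_succ_cost_lt (hw : ∀ i, 0 < w i) (hw' : w 0 + w 1 < 1) (t : CodeTree) :
    ∃ t' : CodeTree, t'.numLeaves = t.numLeaves + 1 ∧ t'.cost w < t.cost w := by
  obtain ⟨τ, hτ⟩ := t.words_nonempty
  obtain ⟨t', hsize, hcost, -⟩ := exists_split_leaf w t hτ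
  have : 0 < (τ.map w).prod := List.prod_pos fun _ h => by
    obtain ⟨i, _, rfl⟩ := List.mem_map.1 h
    exact hw i
  exact ⟨t', hsize, by nlinarith⟩

lemma exists_cost_lt_of_numLeaves_lt (hw : ∀ i, 0 < w i) (hw' : w 0 + w 1 < 1) (t : CodeTree)
    {n : ℕ} (hn : t.numLeaves < n) :
    ∃ t' : CodeTree, t'.numLeaves = n ∧ t'.cost w < t.cost w := by
  induction n, hn using Nat.le_induction with
  | base => exact exists_numLeaves_succ_cost_lt hw hw' t
  | succ n _ ih =>
    obtain ⟨t', rfl, hlt⟩ := ih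
    obtain ⟨t'', hsize, hlt'⟩ := exists_numLeaves_succ_cost_lt hw hw' t'
    exact ⟨t'', hsize, hlt'.trans hlt⟩

lemma exists_cost_le_of_numLeaves_le (hw : ∀ i, 0 < w i) (hw' : w 0 + w 1 < 1) (t : CodeTree)
    {n : ℕ} (hn : t.numLeaves ≤ n) :
    ∃ t' : CodeTree, t'.numLeaves = n ∧ t'.cost w ≤ t.cost w := by
  rcases hn.eq_or_lt with rfl | hlt
  · exact ⟨t, rfl, le_rfl⟩
  · obtain ⟨t', hsize, hcost⟩ := t.exists_cost_lt_of_numLeaves_lt hw hw' hlt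
    exact ⟨t', hsize, hcost.le⟩

end Weights

end CodeTree

/-! ### Moments of `P` and measures of cylinders -/

namespace SelfSimilar

variable {P : Measure ℝ}

lemma integral_eq (hP : SelfSimilar P) {f : ℝ → ℝ} (hf : Integrable f P) :
    ∫ x, f x ∂P = 1 / 4 * ∫ x, f (S1 x) ∂P + 3 / 4 * ∫ x, f (S2 x) ∂P := by
  have hS1 : Measurable S1 := by unfold S1; fun_prop
  have hS2 : Measurable S2 := by unfold S2; fun_prop
  have hf' : Integrable f ((1 / 4 : ℝ≥0∞) • P.map S1 + (3 / 4 : ℝ≥0∞) • P.map S2) := by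
    rwa [← show P = _ from hP]
  obtain ⟨hf1, hf2⟩ := integrable_add_measure.1 hf'
  rw [integrable_smul_measure (by simp) (by finiteness)] at hf1 hf2
  calc ∫ x, f x ∂P
      = ∫ x, f x ∂((1 / 4 : ℝ≥0∞) • P.map S1 + (3 / 4 : ℝ≥0∞) • P.map S2) := by
        rw [← show P = _ from hP]
    _ = _ := by
        rw [integral_add_measure hf'.left_of_add_measure hf'.right_of_add_measure,
          integral_smul_measure, integral_smul_measure,
          integral_map hS1.aemeasurable hf1.aestronglyMeasurable,
          integral_map hS2.aemeasurable hf2.aestronglyMeasurable]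
        simp

variable [IsProbabilityMeasure P]

-- The distance `h` to `[0, 1]` is at least halved by both similarities, so `∫ arctan ∘ h` can
-- be invariant only if `h` vanishes almost everywhere.
lemma ae_mem_Icc (hP : SelfSimilar P) : ∀ᵐ x ∂P, x ∈ Icc (0 : ℝ) 1 := by
  set h : ℝ → ℝ := fun x => max 0 (max (-x) (x - 1)) with hh
  have hcont : Continuous h := by fun_prop
  have hnonneg (x : ℝ) : 0 ≤ h x := le_max_left _ _
  have hS1 (x : ℝ) : h (S1 x) ≤ h x / 2 := by
    simp only [hh, S1]; grind
  have hS2 (x : ℝ) : h (S2 x) ≤ h x / 2 := by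
    simp only [hh, S2]; grind
  have hint (g : ℝ → ℝ) (hg : Continuous g) : Integrable (fun x => Real.arctan (g x)) P :=
    Integrable.of_bound (by fun_prop) (Real.pi / 2)
      (ae_of_all _ fun x => (abs_lt.2 (Real.arctan_mem_Ioo (g x))).le)
  have hle : ∫ x, Real.arctan (h x) ∂P ≤ ∫ x, Real.arctan (h x / 2) ∂P := by
    rw [hP.integral_eq (hint h hcont)]
    have h1 := integral_mono (hint (h ∘ S1) (by unfold S1; fun_prop)) (hint (h · / 2) (by fun_prop))
      fun x => Real.arctan_mono (hS1 x)
    have h2 := integral_mono (hint (h ∘ S2) (by unfold S2; fun_prop)) (hint (h · / 2) (by fun_prop))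
      fun x => Real.arctan_mono (hS2 x)
    simp only [Function.comp_apply] at h1 h2
    linarith
  have hgap (x : ℝ) : 0 ≤ Real.arctan (h x) - Real.arctan (h x / 2) :=
    sub_nonneg.2 (Real.arctan_mono (by linarith [hnonneg x]))
  have hzero := (integral_eq_zero_iff_of_nonneg hgap
    ((hint h hcont).sub (hint (h · / 2) (by fun_prop)))).1 <| le_antisymm
      (by rw [integral_sub (hint h hcont) (hint (h · / 2) (by fun_prop))]; linarith)
      (integral_nonneg hgap)
  filter_upwards [hzero] with x hx
  have : h x = h x / 2 := Real.arctan_injective (sub_eq_zero.1 hx)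
  have hx0 : h x ≤ 0 := by linarith
  simp only [hh, max_le_iff] at hx0
  exact ⟨by linarith [hx0.2.1], by linarith [hx0.2.2]⟩

lemma integrable (hP : SelfSimilar P) {f : ℝ → ℝ} (hf : Continuous f) : Integrable f P := by
  have := hf.continuousOn.integrableOn_compact (μ := P) (isCompact_Icc (a := (0 : ℝ)) (b := 1))
  rwa [IntegrableOn, Measure.restrict_eq_self_of_ae_mem hP.ae_mem_Icc] at this

lemma integral_mono (hP : SelfSimilar P) {f g : ℝ → ℝ} (hf : Continuous f) (hg : Continuous g)
    (h : ∀ x ∈ Icc (0 : ℝ) 1, f x ≤ g x) : ∫ x, f x ∂P ≤ ∫ x, g x ∂P :=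
  integral_mono_ae (hP.integrable hf) (hP.integrable hg) (hP.ae_mem_Icc.mono h)

lemma integral_quadratic (hP : SelfSimilar P) (A B C : ℝ) :
    ∫ x, (A + B * x + C * x ^ 2) ∂P = A + B * ∫ x, x ∂P + C * ∫ x, x ^ 2 ∂P := by
  rw [integral_add (hP.integrable (by fun_prop)) (hP.integrable (by fun_prop)),
    integral_add (hP.integrable (by fun_prop)) (hP.integrable (by fun_prop)),
    integral_const_mul, integral_const_mul]
  simp

lemma integral_id (hP : SelfSimilar P) : ∫ x, x ∂P = 2 / 3 := by
  have h := hP.integral_eq (hP.integrable continuous_id)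
  have h1 := hP.integral_quadratic 0 (1 / 4) 0
  have h2 := hP.integral_quadratic (1 / 2) (1 / 2) 0
  simp only [id, S1, S2] at h
  ring_nf at h h1 h2
  linarith

lemma integral_sq (hP : SelfSimilar P) : ∫ x, x ^ 2 ∂P = 28 / 51 := by
  have h := hP.integral_eq (hP.integrable (continuous_pow 2))
  have h1 := hP.integral_quadratic 0 0 (1 / 16)
  have h2 := hP.integral_quadratic (1 / 4) (1 / 2) (1 / 4)
  rw [hP.integral_id] at h1 h2
  simp only [S1, S2] at h
  ring_nf at h h1 h2
  linarith

lemma integral_affine_sq (hP : SelfSimilar P) (A B : ℝ) :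
    ∫ x, (A + B * x) ^ 2 ∂P = A ^ 2 + 4 / 3 * (A * B) + 28 / 51 * B ^ 2 := by
  have h := hP.integral_quadratic (A ^ 2) (2 * A * B) (B ^ 2)
  rw [hP.integral_id, hP.integral_sq] at h
  rw [show (fun x => (A + B * x) ^ 2) = fun x => A ^ 2 + 2 * A * B * x + B ^ 2 * x ^ 2 from
    funext fun x => by ring, h]
  ring

end SelfSimilar

/-- The factors `pᵢ sᵢ²` by which `P`-mass times squared length shrinks on passing to the `i`-th
subcylinder. -/
def pieceWeight : Fin 2 → ℝ := ![1 / 64, 3 / 16]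

lemma pieceWeight_pos (i : Fin 2) : 0 < pieceWeight i := by
  fin_cases i <;> norm_num [pieceWeight]

lemma pieceWeight_add_lt_one : pieceWeight 0 + pieceWeight 1 < 1 := by
  norm_num [pieceWeight]

lemma CodeTree.cost_pieceWeight_leaf : leaf.cost pieceWeight = 1 := rfl

lemma CodeTree.cost_pieceWeight_node (l r : CodeTree) :
    (node l r).cost pieceWeight = 1 / 64 * l.cost pieceWeight + 3 / 16 * r.cost pieceWeight :=
  rfl

lemma sw_pos (σ : List (Fin 2)) : 0 < sw σ := by
  induction σ with
  | nil => exact one_pos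
  | cons i σ ih => fin_cases i <;> simpa [sw] using ih

lemma Sw_apply (σ : List (Fin 2)) (x : ℝ) : Sw σ x = sw σ * x + Sw σ 0 := by
  induction σ with
  | nil => simp [Sw, sw]
  | cons i σ ih => fin_cases i <;> simp [Sw, S1, S2, sw, ih] <;> ring

lemma Sw_cons (i : Fin 2) (σ : List (Fin 2)) (x : ℝ) :
    Sw (i :: σ) x = if i = 0 then Sw σ x / 4 else Sw σ x / 2 + 1 / 2 := by
  by_cases hi : i = 0 <;> simp [Sw, hi, S1, S2]

lemma Sw_two_thirds_mem_Ioo (σ : List (Fin 2)) : Sw σ (2 / 3) ∈ Ioo (0 : ℝ) 1 := by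
  induction σ with
  | nil => norm_num [Sw]
  | cons i σ ih =>
    obtain ⟨h0, h1⟩ := ih
    rw [Sw_cons]
    split_ifs <;> constructor <;> linarith

lemma Sw_two_thirds_ne_one_third (σ : List (Fin 2)) : Sw σ (2 / 3) ≠ 1 / 3 := by
  rcases σ with _ | ⟨i, σ⟩
  · norm_num [Sw]
  · obtain ⟨h0, h1⟩ := Sw_two_thirds_mem_Ioo σ
    rw [Sw_cons]
    split_ifs <;> intro h <;> linarith

lemma Sw_cons_two_thirds_ne (i : Fin 2) (σ : List (Fin 2)) : Sw (i :: σ) (2 / 3) ≠ 2 / 3 := by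
  have h1 := (Sw_two_thirds_mem_Ioo σ).2
  rw [Sw_cons]
  split_ifs
  · intro h
    linarith
  · exact fun h => Sw_two_thirds_ne_one_third σ (by linarith)

lemma Sw_two_thirds_injective : Function.Injective fun σ => Sw σ (2 / 3) := by
  intro σ
  induction σ with
  | nil =>
    rintro (_ | ⟨j, ρ⟩) h
    · rfl
    · exact absurd h.symm (Sw_cons_two_thirds_ne j ρ)
  | cons i σ ih =>
    rintro (_ | ⟨j, ρ⟩) h
    · exact absurd h (Sw_cons_two_thirds_ne i σ)
    · obtain ⟨hσ0, hσ1⟩ := Sw_two_thirds_mem_Ioo σ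
      obtain ⟨hρ0, hρ1⟩ := Sw_two_thirds_mem_Ioo ρ
      simp only [Sw_cons] at h
      split_ifs at h with hi hj hj
      · rw [ih (a₂ := ρ) (by linarith), hi, hj]
      · linarith
      · linarith
      · rw [ih (a₂ := ρ) (by linarith), show i = j by omega]

lemma J_nil : J [] = Icc 0 1 := image_id _

lemma J_cons (i : Fin 2) (σ : List (Fin 2)) : J (i :: σ) = (if i = 0 then S1 else S2) '' J σ :=
  image_comp _ _ _

lemma J_subset_Icc (σ : List (Fin 2)) : J σ ⊆ Icc 0 1 := by
  induction σ with
  | nil => exact J_nil.subset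
  | cons i σ ih =>
    rw [J_cons]
    rintro _ ⟨x, hx, rfl⟩
    obtain ⟨h0, h1⟩ := ih hx
    fin_cases i <;> simp [S1, S2] <;> constructor <;> linarith

lemma J_eq_Icc (σ : List (Fin 2)) : J σ = Icc (Sw σ 0) (sw σ + Sw σ 0) := by
  rw [J, show Sw σ = fun x => sw σ * x + Sw σ 0 from funext (Sw_apply σ),
    image_affine_Icc' (sw_pos σ)]
  simp

lemma volume_real_J (σ : List (Fin 2)) : volume.real (J σ) = sw σ := by
  rw [J_eq_Icc, Real.volume_real_Icc_of_le (by linarith [sw_pos σ]), add_sub_cancel_right]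

namespace SelfSimilar

variable {P : Measure ℝ} [IsProbabilityMeasure P]

lemma measureReal_eq (hP : SelfSimilar P) {A : Set ℝ} (hA : MeasurableSet A) :
    P.real A = 1 / 4 * P.real (S1 ⁻¹' A) + 3 / 4 * P.real (S2 ⁻¹' A) := by
  have h := hP.integral_eq ((integrable_const (1 : ℝ)).indicator hA)
  have hS1 : MeasurableSet (S1 ⁻¹' A) := (show Measurable S1 by unfold S1; fun_prop) hA
  have hS2 : MeasurableSet (S2 ⁻¹' A) := (show Measurable S2 by unfold S2; fun_prop) hA
  have hcomp (S : ℝ → ℝ) : (fun x => A.indicator (fun _ => (1 : ℝ)) (S x)) =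
      (S ⁻¹' A).indicator 1 := rfl
  rwa [hcomp S1, hcomp S2, integral_indicator_one hS1, integral_indicator_one hS2,
    show (A.indicator fun _ => (1 : ℝ)) = A.indicator 1 from rfl, integral_indicator_one hA] at h

lemma measureReal_eq_zero (hP : SelfSimilar P) {A : Set ℝ} (hA : Disjoint A (Icc 0 1)) :
    P.real A = 0 :=
  (measureReal_eq_zero_iff).2 <|
    measure_mono_null hA.subset_compl_right (mem_ae_iff.1 hP.ae_mem_Icc)

lemma measureReal_J (hP : SelfSimilar P) (σ : List (Fin 2)) : P.real (J σ) = pw σ := by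
  induction σ with
  | nil =>
    simpa [pw, J_nil, measureReal_def] using
      congrArg ENNReal.toReal ((mem_ae_iff_prob_eq_one measurableSet_Icc).1 hP.ae_mem_Icc)
  | cons i σ ih =>
    have hmeas : MeasurableSet (J (i :: σ)) := by
      rw [J_eq_Icc]; exact measurableSet_Icc
    rw [hP.measureReal_eq hmeas, J_cons]
    have hS1 : Function.Injective S1 := fun x y h => by simpa [S1] using h
    have hS2 : Function.Injective S2 := fun x y h => by simpa [S2] using h
    have hJ := J_subset_Icc σ
    fin_cases i
    · have hdisj : Disjoint (S2 ⁻¹' (S1 '' J σ)) (Icc 0 1) :=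
        disjoint_left.2 fun x ⟨y, hy, hyx⟩ hx => by
          simp only [S1, S2] at hyx
          linarith [hx.1, (hJ hy).2]
      simp [preimage_image_eq _ hS1, hP.measureReal_eq_zero hdisj, ih, pw]
    · have hdisj : Disjoint (S1 ⁻¹' (S2 '' J σ)) (Icc 0 1) :=
        disjoint_left.2 fun x ⟨y, hy, hyx⟩ hx => by
          simp only [S1, S2] at hyx
          linarith [hx.2, (hJ hy).1]
      simp [preimage_image_eq _ hS2, hP.measureReal_eq_zero hdisj, ih, pw]

lemma qnt_eq_prod (hP : SelfSimilar P) (σ : List (Fin 2)) :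
    qnt P σ = (σ.map pieceWeight).prod := by
  have h : qnt P σ = pw σ * sw σ ^ 2 := by
    rw [← hP.measureReal_J, ← volume_real_J]; rfl
  rw [h]
  clear h
  induction σ with
  | nil => simp [pw, sw]
  | cons i σ ih =>
    rw [List.map_cons, List.prod_cons, ← ih]
    fin_cases i <;> simp [pw, sw, pieceWeight] <;> ring

end SelfSimilar

/-! ### Distortion under the similarities -/

/-- The squared distance from `x` to the finite set `α`, the integrand of `distortion`
(with value `0` if `α` is empty). -/
def infSqDist (α : Finset ℝ) (x : ℝ) : ℝ := sInf ((fun a => (x - a) ^ 2) '' (α : Set ℝ))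

lemma infSqDist_le {α : Finset ℝ} {a : ℝ} (ha : a ∈ α) (x : ℝ) : infSqDist α x ≤ (x - a) ^ 2 :=
  csInf_le (α.finite_toSet.image _).bddBelow (mem_image_of_mem _ ha)

lemma le_infSqDist {α : Finset ℝ} (hα : α.Nonempty) {x r : ℝ} (h : ∀ a ∈ α, r ≤ (x - a) ^ 2) :
    r ≤ infSqDist α x :=
  le_csInf (hα.to_set.image _) (forall_mem_image.2 h)

lemma infSqDist_nonneg (α : Finset ℝ) (x : ℝ) : 0 ≤ infSqDist α x :=
  Real.sInf_nonneg (forall_mem_image.2 fun _ _ => sq_nonneg _)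

lemma infSqDist_singleton (a x : ℝ) : infSqDist {a} x = (x - a) ^ 2 := by
  simp [infSqDist]

lemma continuous_infSqDist (α : Finset ℝ) : Continuous (infSqDist α) := by
  rcases α.eq_empty_or_nonempty with rfl | hα
  · have : infSqDist ∅ = fun _ => 0 := funext fun x => by simp [infSqDist]
    rw [this]
    exact continuous_const
  · have : infSqDist α = fun x => α.inf' hα fun a => (x - a) ^ 2 :=
      funext fun x => (Finset.inf'_eq_csInf_image α hα _).symm
    rw [this]
    fun_prop

lemma infSqDist_anti {α β : Finset ℝ} (hα : α.Nonempty) {x : ℝ}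
    (h : ∀ p ∈ α, ∃ q ∈ β, |x - q| ≤ |x - p|) : infSqDist β x ≤ infSqDist α x :=
  le_infSqDist hα fun p hp => by
    obtain ⟨q, hq, hqp⟩ := h p hp
    exact (infSqDist_le hq x).trans (sq_le_sq.2 hqp)

lemma infSqDist_affine {v : ℝ} (hv : v ≠ 0) (α : Finset ℝ) (u x : ℝ) :
    infSqDist α (u + v * x) = v ^ 2 * infSqDist (α.image fun p => (p - u) / v) x := by
  rw [infSqDist, infSqDist, ← smul_eq_mul (v ^ 2), ← Real.sInf_smul_of_nonneg (sq_nonneg v),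
    Finset.coe_image, ← image_smul, image_image, image_image]
  refine congrArg sInf (image_congr fun p _ => ?_)
  rw [smul_eq_mul]
  field_simp
  ring

/-- The error of `α` for the image of `P` under `x ↦ u + v x`. Restricting the distortion to a
cylinder `J σ` gives this error up to the factor `P (J σ)`, with `S_σ x = u + v x`. -/
def affineError (P : Measure ℝ) (α : Finset ℝ) (u v : ℝ) : ℝ := ∫ x, infSqDist α (u + v * x) ∂P

lemma affineError_nonneg (P : Measure ℝ) (α : Finset ℝ) (u v : ℝ) : 0 ≤ affineError P α u v :=
  integral_nonneg fun _ => infSqDist_nonneg _ _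

lemma affineError_zero_one (P : Measure ℝ) (α : Finset ℝ) :
    affineError P α 0 1 = distortion P α := by
  simp only [affineError, zero_add, one_mul]; rfl

lemma affineError_eq_sq_mul_distortion (P : Measure ℝ) (α : Finset ℝ) (u : ℝ) {v : ℝ}
    (hv : v ≠ 0) :
    affineError P α u v = v ^ 2 * distortion P (α.image fun p => (p - u) / v) := by
  simp_rw [affineError, infSqDist_affine hv]
  exact integral_const_mul _ _

namespace SelfSimilar

variable {P : Measure ℝ} [IsProbabilityMeasure P]

lemma integrable_infSqDist_affine (hP : SelfSimilar P) (α : Finset ℝ) (u v : ℝ) :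
    Integrable (fun x => infSqDist α (u + v * x)) P :=
  hP.integrable ((continuous_infSqDist α).comp (by fun_prop))

lemma affineError_eq (hP : SelfSimilar P) (α : Finset ℝ) (u v : ℝ) :
    affineError P α u v =
      1 / 4 * affineError P α u (v / 4) + 3 / 4 * affineError P α (u + v / 2) (v / 2) := by
  rw [affineError, hP.integral_eq (hP.integrable_infSqDist_affine α u v), affineError, affineError]
  simp only [S1, S2]
  congr 4 <;> funext x <;> ring_nf

lemma affineError_singleton (hP : SelfSimilar P) (c u v : ℝ) :
    affineError P {c} u v = v ^ 2 * (16 / 153) + (u + 2 / 3 * v - c) ^ 2 := by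
  have h := hP.integral_affine_sq (u - c) v
  simp only [affineError, infSqDist_singleton]
  rw [show (fun x => (u + v * x - c) ^ 2) = fun x => (u - c + v * x) ^ 2 from
    funext fun x => by ring, h]
  ring

lemma distortion_singleton (hP : SelfSimilar P) (c : ℝ) :
    distortion P {c} = 16 / 153 + (2 / 3 - c) ^ 2 := by
  rw [← affineError_zero_one, hP.affineError_singleton]
  ring

lemma affineError_anti (hP : SelfSimilar P) {α β : Finset ℝ} (hα : α.Nonempty) {u v : ℝ}
    (h : ∀ x ∈ Icc (0 : ℝ) 1, ∀ p ∈ α, ∃ q ∈ β, |u + v * x - q| ≤ |u + v * x - p|) :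
    affineError P β u v ≤ affineError P α u v :=
  integral_mono_ae (hP.integrable_infSqDist_affine β u v) (hP.integrable_infSqDist_affine α u v) <|
    hP.ae_mem_Icc.mono fun x hx => infSqDist_anti hα (h x hx)

lemma le_affineError (hP : SelfSimilar P) {α : Finset ℝ} (hα : α.Nonempty) {u v A B : ℝ}
    (h : ∀ x ∈ Icc (0 : ℝ) 1, 0 ≤ A + B * x ∧ ∀ p ∈ α, A + B * x ≤ |u + v * x - p|) :
    A ^ 2 + 4 / 3 * (A * B) + 28 / 51 * B ^ 2 ≤ affineError P α u v := by
  rw [← hP.integral_affine_sq]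
  refine integral_mono_ae (hP.integrable (by fun_prop))
    (hP.integrable_infSqDist_affine α u v) (hP.ae_mem_Icc.mono fun x hx => ?_)
  refine le_infSqDist hα fun p hp => ?_
  rw [← sq_abs (u + v * x - p)]
  exact pow_le_pow_left₀ (h x hx).1 ((h x hx).2 p hp) 2

lemma affineError_image_div_le (hP : SelfSimilar P) {α β : Finset ℝ} {u v : ℝ} (hv : v ≠ 0)
    (hβ : β.Nonempty) (hβα : ∀ q ∈ β, u + v * q ∈ α) :
    affineError P α u v ≤ v ^ 2 * distortion P β := by
  have hscale : affineError P (β.image fun q => u + v * q) u v = v ^ 2 * distortion P β := by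
    rw [affineError_eq_sq_mul_distortion P _ u hv, Finset.image_image]
    congr 2
    exact (Finset.image_congr fun q _ => by simp [hv]).trans Finset.image_id
  rw [← hscale]
  refine hP.affineError_anti (hβ.image _) fun x _ p hp => ⟨p, ?_, le_rfl⟩
  obtain ⟨q, hq, rfl⟩ := Finset.mem_image.1 hp
  exact hβα q hq

lemma distortion_eq (hP : SelfSimilar P) (α : Finset ℝ) :
    distortion P α =
      1 / 4 * affineError P α 0 (1 / 4) + 3 / 4 * affineError P α (1 / 2) (1 / 2) := by
  rw [← affineError_zero_one, hP.affineError_eq, zero_add]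

lemma distortion_centers_le (hP : SelfSimilar P) (t : CodeTree) :
    distortion P t.centers ≤ t.cost pieceWeight * (16 / 153) := by
  induction t with
  | leaf => simp [CodeTree.centers_leaf, hP.distortion_singleton, CodeTree.cost_pieceWeight_leaf]
  | node l r ihl ihr =>
    have hl := hP.affineError_image_div_le (α := (l.node r).centers) (u := 0) (v := 1 / 4)
      (by norm_num) l.centers_nonempty fun q hq => by
        rw [CodeTree.centers_node]
        exact Finset.mem_union_left _ (Finset.mem_image.2 ⟨q, hq, by rw [S1]; ring⟩)
    have hr := hP.affineError_image_div_le (α := (l.node r).centers) (u := 1 / 2) (v := 1 / 2)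
      (by norm_num) r.centers_nonempty fun q hq => by
        rw [CodeTree.centers_node]
        exact Finset.mem_union_right _ (Finset.mem_image.2 ⟨q, hq, by rw [S2]; ring⟩)
    rw [hP.distortion_eq, CodeTree.cost_pieceWeight_node]
    linarith

end SelfSimilar

/-! ### Sets of two points -/

/-- The mean shortfall `∫ (t - x)⁺ dP` of `P` below the level `t`. It measures what a second mean
to the left of a first one gains. -/
def meanShortfall (P : Measure ℝ) (t : ℝ) : ℝ := ∫ x, max (t - x) 0 ∂P

namespace SelfSimilar

variable {P : Measure ℝ} [IsProbabilityMeasure P]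

lemma meanShortfall_of_nonpos (hP : SelfSimilar P) {t : ℝ} (ht : t ≤ 0) :
    meanShortfall P t = 0 :=
  integral_eq_zero_of_ae <| hP.ae_mem_Icc.mono fun _ hx => max_eq_right (by linarith [hx.1])

lemma meanShortfall_of_one_le (hP : SelfSimilar P) {t : ℝ} (ht : 1 ≤ t) :
    meanShortfall P t = t - 2 / 3 := by
  have h : (fun x => max (t - x) 0) =ᵐ[P] fun x => t - x :=
    hP.ae_mem_Icc.mono fun _ hx => max_eq_left (by linarith [hx.2])
  rw [meanShortfall, integral_congr_ae h,
    integral_sub (integrable_const t) (hP.integrable continuous_id'), hP.integral_id]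
  simp

lemma meanShortfall_eq (hP : SelfSimilar P) (t : ℝ) :
    meanShortfall P t = 1 / 16 * meanShortfall P (4 * t) + 3 / 8 * meanShortfall P (2 * t - 1) := by
  have hS1 (x : ℝ) : max (t - S1 x) 0 = 1 / 4 * max (4 * t - x) 0 := by
    rw [mul_max_of_nonneg _ _ (by norm_num), S1]
    congr 1 <;> ring
  have hS2 (x : ℝ) : max (t - S2 x) 0 = 1 / 2 * max (2 * t - 1 - x) 0 := by
    rw [mul_max_of_nonneg _ _ (by norm_num), S2]
    congr 1 <;> ring
  rw [meanShortfall, hP.integral_eq (hP.integrable (by fun_prop))]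
  simp_rw [hS1, hS2, integral_const_mul]
  rw [meanShortfall, meanShortfall]
  ring

lemma meanShortfall_le_self_improve (hP : SelfSimilar P) {ε : ℝ} (hε : 0 ≤ ε)
    (h : ∀ t ∈ Icc (0 : ℝ) 1, meanShortfall P t ≤ 3 / 8 * t ^ 2 + ε) :
    ∀ t ∈ Icc (0 : ℝ) 1, meanShortfall P t ≤ 3 / 8 * t ^ 2 + 3 / 8 * ε := by
  rintro t ⟨h0, h1⟩
  rw [hP.meanShortfall_eq]
  rcases le_total t (1 / 4) with h4 | h4
  · have hleft := h (4 * t) ⟨by linarith, by linarith⟩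
    rw [hP.meanShortfall_of_nonpos (t := 2 * t - 1) (by linarith)]
    nlinarith
  rw [hP.meanShortfall_of_one_le (t := 4 * t) (by linarith)]
  rcases le_total t (1 / 2) with h2 | h2
  · rw [hP.meanShortfall_of_nonpos (t := 2 * t - 1) (by linarith)]
    nlinarith [sq_nonneg (3 * t - 1)]
  · have hright := h (2 * t - 1) ⟨by linarith, by linarith⟩
    nlinarith [mul_nonneg (sub_nonneg.2 h2) (sub_nonneg.2 h1)]

lemma meanShortfall_le (hP : SelfSimilar P) {t : ℝ} (ht : t ∈ Icc (0 : ℝ) 1) :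
    meanShortfall P t ≤ 3 / 8 * t ^ 2 := by
  have hiter (k : ℕ) : ∀ t ∈ Icc (0 : ℝ) 1,
      meanShortfall P t ≤ 3 / 8 * t ^ 2 + (3 / 8 : ℝ) ^ k := by
    induction k with
    | zero =>
      rintro t ⟨-, h1⟩
      have h := hP.integral_mono (f := fun x => max (t - x) 0) (g := fun _ => 1) (by fun_prop)
        (by fun_prop) fun x hx => max_le (by linarith [hx.1]) one_pos.le
      rw [integral_const, probReal_univ, one_smul, ← meanShortfall] at h
      nlinarith [sq_nonneg t]
    | succ k ih =>
      simpa only [pow_succ'] using hP.meanShortfall_le_self_improve (by positivity) ih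
  have hlim : Filter.Tendsto (fun k : ℕ => 3 / 8 * t ^ 2 + (3 / 8 : ℝ) ^ k) Filter.atTop
      (nhds (3 / 8 * t ^ 2 + 0)) :=
    (tendsto_pow_atTop_nhds_zero_of_lt_one (by norm_num) (by norm_num)).const_add _
  rw [add_zero] at hlim
  exact ge_of_tendsto' hlim fun k => hiter k t ht

-- Minimizing over `c - a` for fixed midpoint `m`.
lemma sub_le_distortion_pair (hP : SelfSimilar P) {a c m : ℝ} (hac : a ≤ c)
    (hm : a + c = 2 * m) :
    16 / 153 - 4 * meanShortfall P m * (meanShortfall P m + 2 / 3 - m) ≤ distortion P {a, c} := by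
  have hint : Integrable (fun x => max (m - x) 0) P := hP.integrable (by fun_prop)
  have hlow : ∫ x, ((-c + 1 * x) ^ 2 - 2 * (c - a) * max (m - x) 0) ∂P ≤ distortion P {a, c} := by
    refine hP.integral_mono (by fun_prop) (continuous_infSqDist _) fun x _ =>
      le_infSqDist (Finset.insert_nonempty _ _) fun p hp => ?_
    have hle := mul_le_mul_of_nonneg_left (le_max_left (m - x) 0) (sub_nonneg.2 hac)
    have hnonneg := mul_nonneg (sub_nonneg.2 hac) (le_max_right (m - x) 0)
    rcases Finset.mem_insert.1 hp with rfl | hp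
    · nlinarith
    · rw [Finset.mem_singleton.1 hp]
      nlinarith
  rw [integral_sub (hP.integrable (by fun_prop)) (hint.const_mul _), hP.integral_affine_sq,
    integral_const_mul, ← meanShortfall] at hlow
  obtain rfl : a = 2 * m - c := by linarith
  nlinarith [sq_nonneg (c - 2 / 3 - 2 * meanShortfall P m)]

lemma lt_distortion_pair (hP : SelfSimilar P) {a c : ℝ} (hac : a ≤ c) (h1 : 1 < a + c)
    (h2 : a + c ≤ 2) : 13 / 64 * (16 / 153) < distortion P {a, c} := by
  obtain ⟨h, hm⟩ : ∃ h, a + c = 2 * (1 / 2 + h) := ⟨(a + c) / 2 - 1 / 2, by ring⟩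
  have hpos : 0 < h := by linarith
  set φ := meanShortfall P (1 / 2 + h) with hφ
  have hφ_nonneg : 0 ≤ φ := integral_nonneg fun _ => le_max_right _ _
  obtain ⟨K, hK⟩ : ∃ K, K = 1 / 12 + h / 4 + 9 / 16 * h ^ 2 := ⟨_, rfl⟩
  have hφ_le : φ ≤ K := by
    have := hP.meanShortfall_le (t := 2 * (1 / 2 + h) - 1) ⟨by linarith, by linarith⟩
    rw [hφ, hP.meanShortfall_eq, hP.meanShortfall_of_one_le (by linarith)]
    nlinarith
  have hφ_gain : φ * (φ + 1 / 6 - h) < 1 / 48 := by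
    have hK_nonneg : 0 ≤ K + 1 / 6 - h := by
      rw [show K + 1 / 6 - h = (1 / 2 - 3 / 4 * h) ^ 2 by rw [hK]; ring]
      positivity
    calc φ * (φ + 1 / 6 - h)
        ≤ K * (K + 1 / 6 - h) := by nlinarith
      _ = 1 / 48 - h ^ 3 * (9 / 32 - 81 / 256 * h) := by rw [hK]; ring
      _ < 1 / 48 := sub_lt_self _ (mul_pos (pow_pos hpos 3) (by linarith))
  have := hP.sub_le_distortion_pair hac hm
  linarith

end SelfSimilar

/-! ### Sets with a single point nearest to the gap -/

/-- The inductive claim on a finite set `α`: some code tree with as many leaves as `α` has points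
costs at most the distortion of `α`, and can only be equally good if its centers are `α`. The
number `16 / 153` is the variance of `P`. -/
def DominatedByTree (P : Measure ℝ) (α : Finset ℝ) : Prop :=
  ∃ t : CodeTree, t.numLeaves = α.card ∧ t.cost pieceWeight * (16 / 153) ≤ distortion P α ∧
    (distortion P α = t.cost pieceWeight * (16 / 153) → α = t.centers)

lemma sub_div_injective (u : ℝ) {v : ℝ} (hv : v ≠ 0) :
    Function.Injective fun p : ℝ => (p - u) / v := fun _ _ h => by
  simpa [div_left_inj' hv] using h

namespace DominatedByTree

variable {P : Measure ℝ}

lemma of_cost_lt {α : Finset ℝ} {t : CodeTree} (ht : t.numLeaves ≤ α.card)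
    (hlt : t.cost pieceWeight * (16 / 153) < distortion P α) : DominatedByTree P α := by
  obtain ⟨s, hs, hst⟩ :=
    t.exists_cost_le_of_numLeaves_le pieceWeight_pos pieceWeight_add_lt_one ht
  have hslt : s.cost pieceWeight * (16 / 153) < distortion P α := by linarith
  exact ⟨s, hs, hslt.le, fun h => absurd h hslt.ne'⟩

lemma exists_cost_le_affineError {β : Finset ℝ} {u v : ℝ} (hv : v ≠ 0)
    (h : DominatedByTree P (β.image fun p => (p - u) / v)) :
    ∃ t : CodeTree, t.numLeaves = β.card ∧
      v ^ 2 * (t.cost pieceWeight * (16 / 153)) ≤ affineError P β u v ∧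
      (affineError P β u v = v ^ 2 * (t.cost pieceWeight * (16 / 153)) →
        β.image (fun p => (p - u) / v) = t.centers) := by
  obtain ⟨t, hsize, hle, heq⟩ := h
  rw [affineError_eq_sq_mul_distortion P β u hv]
  refine ⟨t, by rw [hsize, Finset.card_image_of_injective _ (sub_div_injective u hv)],
    mul_le_mul_of_nonneg_left hle (sq_nonneg v), fun h => heq ?_⟩
  exact mul_left_cancel₀ (pow_ne_zero 2 hv) h

end DominatedByTree

lemma abs_sub_le_abs_sub_of_two_mul_le {x y p : ℝ} (hyp : y ≤ p) (h : 2 * x ≤ y + p) :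
    |x - y| ≤ |x - p| := by
  rw [← sq_le_sq]
  nlinarith [mul_nonneg (sub_nonneg.2 hyp) (sub_nonneg.2 h)]

lemma abs_sub_le_abs_sub_of_le_two_mul {x y p : ℝ} (hpy : p ≤ y) (h : y + p ≤ 2 * x) :
    |x - y| ≤ |x - p| := by
  rw [← sq_le_sq]
  nlinarith [mul_nonneg (sub_nonneg.2 hpy) (sub_nonneg.2 h)]

lemma card_eq_card_filter_lt_add_one_add_card_filter_gt {α : Finset ℝ} {a : ℝ} (ha : a ∈ α) :
    α.card = (α.filter (· < a)).card + 1 + (α.filter (a < ·)).card := by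
  have hge : α.filter (¬ · < a) = insert a (α.filter (a < ·)) := by
    ext p
    simp only [Finset.mem_filter, Finset.mem_insert, not_lt, le_iff_eq_or_lt]
    grind
  rw [← Finset.card_filter_add_card_filter_not (s := α) (· < a), hge,
    Finset.card_insert_of_notMem (by simp)]
  omega

/-- The point `a` of `α` is strictly nearer than any other point of `α` to both ends, hence to
every point, of the gap `[1/4, 1/2]` between the two first-level cylinders. -/
structure StraddlesGap (α : Finset ℝ) (a : ℝ) : Prop where
  mem : a ∈ α
  add_lt : ∀ p ∈ α, p < a → p + a < 1 / 2
  lt_add : ∀ p ∈ α, a < p → 1 < p + a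

namespace StraddlesGap

variable {α : Finset ℝ} {a : ℝ}

lemma nonempty (h : StraddlesGap α a) : α.Nonempty := ⟨a, h.mem⟩

lemma cases (h : StraddlesGap α a) {p : ℝ} (hp : p ∈ α) :
    (p < a ∧ p + a < 1 / 2) ∨ p = a ∨ (a < p ∧ 1 < p + a) := by
  rcases lt_trichotomy p a with hpa | hpa | hpa
  · exact Or.inl ⟨hpa, h.add_lt p hp hpa⟩
  · exact Or.inr (Or.inl hpa)
  · exact Or.inr (Or.inr ⟨hpa, h.lt_add p hp hpa⟩)

end StraddlesGap

namespace SelfSimilar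

variable {P : Measure ℝ} [IsProbabilityMeasure P] {α : Finset ℝ} {a : ℝ}

lemma distortion_eq_add_add (hP : SelfSimilar P) (α : Finset ℝ) :
    distortion P α = 1 / 4 * affineError P α 0 (1 / 4) +
      3 / 16 * affineError P α (1 / 2) (1 / 8) + 9 / 16 * affineError P α (3 / 4) (1 / 4) := by
  rw [hP.distortion_eq, hP.affineError_eq α (1 / 2)]
  norm_num
  ring

lemma affineError_zero_quarter_eq (hP : SelfSimilar P) (α : Finset ℝ) :
    affineError P α 0 (1 / 4) =
      1 / 4 * affineError P α 0 (1 / 16) + 3 / 4 * affineError P α (1 / 8) (1 / 8) := by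
  rw [hP.affineError_eq]
  norm_num

-- The bounds `13/64`, `55/1024` and `217/16384` below are the costs of code trees with two, three
-- and five leaves.
lemma lt_distortion_of_forall_le_half (hP : SelfSimilar P) (hα : α.Nonempty)
    (h : ∀ p ∈ α, p ≤ 1 / 2) : 13 / 64 * (16 / 153) < distortion P α := by
  have hright := hP.le_affineError hα (u := 1 / 2) (v := 1 / 2) (A := 0) (B := 1 / 2) fun x hx =>
    ⟨by linarith [hx.1], fun p hp => le_abs.2 (Or.inl (by linarith [h p hp]))⟩
  have := affineError_nonneg P α 0 (1 / 4)
  rw [hP.distortion_eq]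
  linarith

lemma le_affineError_half_of_straddlesGap (hP : SelfSimilar P) (h : StraddlesGap α a)
    (ha : a ≤ 3 / 8) :
    (1 / 2 - a) ^ 2 - 1 / 6 * (1 / 2 - a) + 7 / 816 ≤ affineError P α (1 / 2) (1 / 8) := by
  refine (le_of_eq ?_).trans <| hP.le_affineError h.nonempty (A := 1 / 2 - a) (B := -1 / 8)
    fun x ⟨hx0, hx1⟩ => ⟨by linarith, fun p hp => le_abs.2 ?_⟩
  · ring
  · rcases h.cases hp with hp | rfl | hp
    · left; linarith
    · left; linarith
    · right; linarith

lemma le_affineError_eighth_of_straddlesGap (hP : SelfSimilar P) (h : StraddlesGap α a)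
    (ha : 3 / 8 ≤ a) : 7 / 816 ≤ affineError P α (1 / 8) (1 / 8) := by
  refine (le_of_eq ?_).trans <| hP.le_affineError h.nonempty (A := 0) (B := 1 / 8)
    fun x ⟨hx0, hx1⟩ => ⟨by linarith, fun p hp => le_abs.2 ?_⟩
  · ring
  · rcases h.cases hp with hp | rfl | hp
    · left; linarith
    · right; linarith
    · right; linarith

lemma le_affineError_three_sixteenths_of_straddlesGap (hP : SelfSimilar P)
    (h : StraddlesGap α a) (ha : 5 / 16 ≤ a) :
    (a - 5 / 16) ^ 2 + 1 / 12 * (a - 5 / 16) + 7 / 3264 ≤ affineError P α (3 / 16) (1 / 16) := by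
  refine (le_of_eq ?_).trans <| hP.le_affineError h.nonempty (A := a - 5 / 16) (B := 1 / 16)
    fun x ⟨hx0, hx1⟩ => ⟨by linarith, fun p hp => le_abs.2 ?_⟩
  · ring
  · rcases h.cases hp with hp | rfl | hp
    · left; linarith
    · right; linarith
    · right; linarith

lemma le_gap_error_of_straddlesGap (hP : SelfSimilar P) (h : StraddlesGap α a) (ha : a ≤ 3 / 8) :
    99 / 5000 * (16 / 153) ≤
      1 / 4 * affineError P α 0 (1 / 4) + 3 / 16 * affineError P α (1 / 2) (1 / 8) := by
  have hright := hP.le_affineError_half_of_straddlesGap h ha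
  have hleft := affineError_nonneg P α 0 (1 / 4)
  rcases le_total a (5 / 16) with ha' | ha'
  · nlinarith [sq_nonneg (a - 5 / 16)]
  · have hsub : 9 / 16 * affineError P α (3 / 16) (1 / 16) ≤ affineError P α 0 (1 / 4) := by
      have h0 := affineError_nonneg P α 0 (1 / 16)
      have h1 := affineError_nonneg P α (1 / 8) (1 / 32)
      have hsplit := hP.affineError_eq α (1 / 8) (1 / 8)
      norm_num at hsplit
      rw [hP.affineError_zero_quarter_eq]
      linarith
    have hedge := hP.le_affineError_three_sixteenths_of_straddlesGap h ha'
    nlinarith [sq_nonneg (a - 3 / 8 + 1 / 48)]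

lemma lt_distortion_of_straddlesGap (hP : SelfSimilar P) (h : StraddlesGap α a) :
    217 / 16384 * (16 / 153) < distortion P α := by
  have h0 := affineError_nonneg P α 0 (1 / 16)
  have h1 := affineError_nonneg P α (1 / 2) (1 / 8)
  have h2 := affineError_nonneg P α (3 / 4) (1 / 4)
  rw [hP.distortion_eq_add_add]
  rcases le_total a (3 / 8) with ha | ha
  · linarith [hP.le_gap_error_of_straddlesGap h ha]
  · linarith [hP.le_affineError_eighth_of_straddlesGap h ha, hP.affineError_zero_quarter_eq α]

lemma lt_distortion_of_straddlesGap_min (hP : SelfSimilar P) (h : StraddlesGap α a)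
    (hmin : ∀ p ∈ α, a ≤ p) : 55 / 1024 * (16 / 153) < distortion P α := by
  have hleft : (1 / 4) ^ 2 * (16 / 153) + (0 + 2 / 3 * (1 / 4) - a) ^ 2 ≤
      affineError P α 0 (1 / 4) := by
    rw [← hP.affineError_singleton]
    refine hP.affineError_anti h.nonempty fun x ⟨_, hx1⟩ p hp =>
      ⟨a, Finset.mem_singleton_self a, ?_⟩
    rcases (hmin p hp).eq_or_lt with rfl | hap
    · exact le_rfl
    · exact abs_sub_le_abs_sub_of_two_mul_le hap.le (by linarith [h.lt_add p hp hap])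
  have h1 := affineError_nonneg P α (1 / 2) (1 / 8)
  have h2 := affineError_nonneg P α (3 / 4) (1 / 4)
  rw [hP.distortion_eq_add_add]
  rcases le_total a (3 / 8) with ha | ha
  · have hright := hP.le_affineError_half_of_straddlesGap h ha
    nlinarith [sq_nonneg (a - (1 / 6 + 3 / 28))]
  · nlinarith

lemma affineError_filter_gt_le (hP : SelfSimilar P) (h : StraddlesGap α a) (ha : a ≤ 1 / 2)
    (hα : ∀ p ∈ α, p ≤ 1) (hne : (α.filter (a < ·)).Nonempty) :
    affineError P (α.filter (a < ·)) (3 / 4) (1 / 4) ≤ affineError P α (3 / 4) (1 / 4) := by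
  refine hP.affineError_anti h.nonempty fun x ⟨hx0, _⟩ p hp => ?_
  rcases lt_or_ge a p with hap | hpa
  · exact ⟨p, Finset.mem_filter.2 ⟨hp, hap⟩, le_rfl⟩
  · obtain ⟨c, hc⟩ := hne
    obtain ⟨hcα, hac⟩ := Finset.mem_filter.1 hc
    exact ⟨c, hc, abs_sub_le_abs_sub_of_le_two_mul (by linarith) (by linarith [hα c hcα])⟩

lemma lt_distortion_of_straddlesGap_of_filter_gt_eq_singleton (hP : SelfSimilar P)
    (h : StraddlesGap α a) (ha : a ≤ 1 / 2) (hα : ∀ p ∈ α, p ≤ 1) {c : ℝ}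
    (hc : α.filter (a < ·) = {c}) : 55 / 1024 * (16 / 153) < distortion P α := by
  have hfar : (1 / 4) ^ 2 * (16 / 153) + (3 / 4 + 2 / 3 * (1 / 4) - c) ^ 2 ≤
      affineError P α (3 / 4) (1 / 4) := by
    rw [← hP.affineError_singleton, ← hc]
    exact hP.affineError_filter_gt_le h ha hα (hc ▸ Finset.singleton_nonempty c)
  have h0 := affineError_nonneg P α 0 (1 / 16)
  have h1 := affineError_nonneg P α (1 / 2) (1 / 8)
  rw [hP.distortion_eq_add_add]
  rcases le_total a (3 / 8) with ha' | ha'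
  · nlinarith [hP.le_gap_error_of_straddlesGap h ha', sq_nonneg (3 / 4 + 2 / 3 * (1 / 4) - c)]
  have hnear := hP.le_affineError_eighth_of_straddlesGap h ha'
  have hsplit := hP.affineError_zero_quarter_eq α
  rcases le_total c (3 / 4) with hc' | hc'
  · nlinarith
  · have hmid : 7 / 816 ≤ affineError P α (1 / 2) (1 / 8) := by
      refine (le_of_eq ?_).trans <| hP.le_affineError h.nonempty (A := 0) (B := 1 / 8)
        fun x ⟨hx0, hx1⟩ => ⟨by linarith, fun p hp => le_abs.2 ?_⟩
      · ring
      · rcases lt_or_ge a p with hap | hpa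
        · obtain rfl : p = c := by
            rw [← Finset.mem_singleton, ← hc]
            exact Finset.mem_filter.2 ⟨hp, hap⟩
          right; linarith
        · left; linarith
    nlinarith [sq_nonneg (3 / 4 + 2 / 3 * (1 / 4) - c)]

lemma lt_affineError_of_straddlesGap_of_filter_lt_eq_singleton (hP : SelfSimilar P)
    (h : StraddlesGap α a) (ha : 3 / 8 ≤ a) {y : ℝ} (hy : α.filter (· < a) = {y}) :
    1 / 16 * (16 / 153) < affineError P α 0 (1 / 4) := by
  have hcases {p : ℝ} (hp : p ∈ α) : p = y ∨ a ≤ p := by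
    rcases lt_or_ge p a with hpa | hap
    · left
      rw [← Finset.mem_singleton, ← hy]
      exact Finset.mem_filter.2 ⟨hp, hpa⟩
    · exact Or.inr hap
  obtain ⟨hyα, hya⟩ : y ∈ α ∧ y < a := Finset.mem_filter.1 (hy ▸ Finset.mem_singleton_self y)
  have hya' := h.add_lt y hyα hya
  rw [hP.affineError_zero_quarter_eq]
  rcases le_total y (1 / 16) with hy' | hy'
  · have hright : (1 / 16) ^ 2 + 4 / 3 * (1 / 16 * (1 / 16)) + 28 / 51 * (1 / 16) ^ 2 ≤
        affineError P α (1 / 8) (1 / 8) :=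
      hP.le_affineError h.nonempty fun x ⟨hx0, hx1⟩ => ⟨by linarith, fun p hp => le_abs.2 <| by
        rcases hcases hp with rfl | hp
        · left; linarith
        · right; linarith⟩
    linarith [affineError_nonneg P α 0 (1 / 16)]
  · have hleft : (1 / 16) ^ 2 * (16 / 153) + (0 + 2 / 3 * (1 / 16) - y) ^ 2 ≤
        affineError P α 0 (1 / 16) := by
      rw [← hP.affineError_singleton]
      refine hP.affineError_anti h.nonempty fun x ⟨_, hx1⟩ p hp =>
        ⟨y, Finset.mem_singleton_self y, ?_⟩
      rcases hcases hp with rfl | hp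
      · exact le_rfl
      · exact abs_sub_le_abs_sub_of_two_mul_le (by linarith) (by linarith)
    nlinarith [hP.le_affineError_eighth_of_straddlesGap h ha]

end SelfSimilar

namespace SelfSimilar

variable {P : Measure ℝ} [IsProbabilityMeasure P] {α : Finset ℝ} {a : ℝ}

lemma dominatedByTree_of_straddlesGap_of_filter_lt_eq_singleton (hP : SelfSimilar P)
    (h : StraddlesGap α a) (ha : 3 / 8 ≤ a) {y : ℝ} (hy : α.filter (· < a) = {y})
    (ih : ∀ β : Finset ℝ, β.Nonempty → β.card < α.card → DominatedByTree P β) :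
    DominatedByTree P α := by
  set β := insert a (α.filter (a < ·)) with hβ
  have hcard : α.card = 1 + β.card := by
    rw [card_eq_card_filter_lt_add_one_add_card_filter_gt h.mem, hy,
      Finset.card_insert_of_notMem (by simp), Finset.card_singleton]
    omega
  have hβα : affineError P β (1 / 2) (1 / 2) ≤ affineError P α (1 / 2) (1 / 2) := by
    refine hP.affineError_anti h.nonempty fun x ⟨hx0, _⟩ p hp => ?_
    rcases h.cases hp with ⟨hpa, hpa'⟩ | rfl | ⟨hap, -⟩
    · exact ⟨a, by simp [hβ],
        abs_sub_le_abs_sub_of_le_two_mul hpa.le (by linarith)⟩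
    · exact ⟨p, by simp [hβ], le_rfl⟩
    · exact ⟨p, by simp [hβ, hp, hap], le_rfl⟩
  obtain ⟨t, hsize, hcost, -⟩ :=
    DominatedByTree.exists_cost_le_affineError (β := β) (u := 1 / 2) (v := 1 / 2) (by norm_num) <|
      ih _ ((Finset.insert_nonempty _ _).image _) (Finset.card_image_le.trans_lt (by omega))
  refine DominatedByTree.of_cost_lt (t := .node .leaf t) (by simp [CodeTree.numLeaves, *]) ?_
  have := hP.lt_affineError_of_straddlesGap_of_filter_lt_eq_singleton h ha hy
  rw [CodeTree.cost_pieceWeight_node, CodeTree.cost_pieceWeight_leaf, hP.distortion_eq]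
  linarith

lemma dominatedByTree_of_straddlesGap_of_card_filter_gt_eq_two (hP : SelfSimilar P)
    (h : StraddlesGap α a) (ha : a ≤ 3 / 8) (hα : ∀ p ∈ α, p ≤ 1) (hcard : 4 ≤ α.card)
    (hgt : (α.filter (a < ·)).card = 2)
    (ih : ∀ β : Finset ℝ, β.Nonempty → β.card < α.card → DominatedByTree P β) :
    DominatedByTree P α := by
  have hne : (α.filter (a < ·)).Nonempty := Finset.card_pos.1 (by omega)
  obtain ⟨t, hsize, hcost, -⟩ :=
    DominatedByTree.exists_cost_le_affineError (u := 3 / 4) (v := 1 / 4) (by norm_num) <|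
      ih _ (hne.image _) (Finset.card_image_le.trans_lt (by omega))
  rw [CodeTree.eq_node_leaf_leaf_of_numLeaves_eq_two (hsize.trans hgt)] at hcost
  have hfar := hP.affineError_filter_gt_le h (by linarith) hα hne
  have hgap := hP.le_gap_error_of_straddlesGap h ha
  refine DominatedByTree.of_cost_lt (t := .node .leaf (.node .leaf (.node .leaf .leaf)))
    (by simpa [CodeTree.numLeaves] using hcard) ?_
  rw [hP.distortion_eq_add_add]
  simp only [CodeTree.cost_pieceWeight_node, CodeTree.cost_pieceWeight_leaf] at hcost ⊢
  linarith

lemma dominatedByTree_of_straddlesGap_min (hP : SelfSimilar P) (h : StraddlesGap α a)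
    (hmin : ∀ p ∈ α, a ≤ p) (hα : ∀ p ∈ α, p ≤ 1) (hcard : 2 ≤ α.card) :
    DominatedByTree P α := by
  have hlt : α.filter (· < a) = ∅ :=
    Finset.filter_eq_empty_iff.2 fun p hp => not_lt.2 (hmin p hp)
  have hsum := card_eq_card_filter_lt_add_one_add_card_filter_gt h.mem
  rw [hlt, Finset.card_empty] at hsum
  rcases hcard.eq_or_lt with hcard' | hcard'
  · obtain ⟨c, hc⟩ := Finset.card_eq_one.1 (show (α.filter (a < ·)).card = 1 by omega)
    obtain ⟨hcα, hac⟩ : c ∈ α ∧ a < c := Finset.mem_filter.1 (hc ▸ Finset.mem_singleton_self c)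
    obtain rfl : {a, c} = α := Finset.eq_of_subset_of_card_le
      (Finset.insert_subset h.mem (Finset.singleton_subset_iff.2 hcα))
      (by rw [Finset.card_pair hac.ne, hcard'])
    refine DominatedByTree.of_cost_lt (t := .node .leaf .leaf) hcard ?_
    simp only [CodeTree.cost_pieceWeight_node, CodeTree.cost_pieceWeight_leaf]
    linarith [hP.lt_distortion_pair hac.le (by linarith [h.lt_add c hcα hac])
      (by linarith [hα c hcα])]
  · refine DominatedByTree.of_cost_lt (t := .node .leaf (.node .leaf .leaf)) hcard' ?_
    simp only [CodeTree.cost_pieceWeight_node, CodeTree.cost_pieceWeight_leaf]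
    linarith [hP.lt_distortion_of_straddlesGap_min h hmin]

lemma dominatedByTree_of_straddlesGap_of_nonempty (hP : SelfSimilar P) (h : StraddlesGap α a)
    (ha : a ≤ 1 / 2) (hα : ∀ p ∈ α, p ≤ 1) (hlt : (α.filter (· < a)).Nonempty)
    (hgt : (α.filter (a < ·)).Nonempty)
    (ih : ∀ β : Finset ℝ, β.Nonempty → β.card < α.card → DominatedByTree P β) :
    DominatedByTree P α := by
  have hsum := card_eq_card_filter_lt_add_one_add_card_filter_gt h.mem
  rw [← Finset.card_pos] at hlt hgt
  rcases (Nat.succ_le_of_lt hgt).eq_or_lt with hgt1 | hgt2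
  · obtain ⟨c, hc⟩ := Finset.card_eq_one.1 hgt1.symm
    refine DominatedByTree.of_cost_lt (t := .node .leaf (.node .leaf .leaf))
      (by simp only [CodeTree.numLeaves]; omega) ?_
    simp only [CodeTree.cost_pieceWeight_node, CodeTree.cost_pieceWeight_leaf]
    linarith [hP.lt_distortion_of_straddlesGap_of_filter_gt_eq_singleton h ha hα hc]
  rcases Nat.lt_or_ge α.card 5 with hcard4 | hcard5
  · rcases le_total a (3 / 8) with ha' | ha'
    · exact hP.dominatedByTree_of_straddlesGap_of_card_filter_gt_eq_two h ha' hα (by omega)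
        (by omega) ih
    · obtain ⟨y, hy⟩ := Finset.card_eq_one.1 (show (α.filter (· < a)).card = 1 by omega)
      exact hP.dominatedByTree_of_straddlesGap_of_filter_lt_eq_singleton h ha' hy ih
  · refine DominatedByTree.of_cost_lt
      (t := .node (.node .leaf .leaf) (.node .leaf (.node .leaf .leaf))) hcard5 ?_
    simp only [CodeTree.cost_pieceWeight_node, CodeTree.cost_pieceWeight_leaf]
    linarith [hP.lt_distortion_of_straddlesGap h]

lemma dominatedByTree_of_straddlesGap (hP : SelfSimilar P) (h : StraddlesGap α a)
    (hα : ∀ p ∈ α, p ∈ Icc (0 : ℝ) 1) (hcard : 2 ≤ α.card)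
    (ih : ∀ β : Finset ℝ, β.Nonempty → β.card < α.card → DominatedByTree P β) :
    DominatedByTree P α := by
  have hα1 : ∀ p ∈ α, p ≤ 1 := fun p hp => (hα p hp).2
  rcases (α.filter (· < a)).eq_empty_or_nonempty with hlt | hlt
  · exact hP.dominatedByTree_of_straddlesGap_min h
      (fun p hp => not_lt.1 (Finset.filter_eq_empty_iff.1 hlt hp)) hα1 hcard
  have ha : a ≤ 1 / 2 := by
    obtain ⟨y, hy⟩ := hlt
    obtain ⟨hyα, hya⟩ := Finset.mem_filter.1 hy
    linarith [h.add_lt y hyα hya, (hα y hyα).1]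
  rcases (α.filter (a < ·)).eq_empty_or_nonempty with hgt | hgt
  · have hmax : ∀ p ∈ α, p ≤ a := fun p hp => not_lt.1 (Finset.filter_eq_empty_iff.1 hgt hp)
    refine DominatedByTree.of_cost_lt (t := .node .leaf .leaf) hcard ?_
    simp only [CodeTree.cost_pieceWeight_node, CodeTree.cost_pieceWeight_leaf]
    linarith [hP.lt_distortion_of_forall_le_half h.nonempty fun p hp => (hmax p hp).trans ha]
  · exact hP.dominatedByTree_of_straddlesGap_of_nonempty h ha hα1 hlt hgt ih

end SelfSimilar

/-! ### Optimal sets and minimal code trees -/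

lemma exists_consecutive_or_straddlesGap {α : Finset ℝ} (hα : α.Nonempty) :
    (∃ b ∈ α, ∃ c ∈ α, b < c ∧ (∀ p ∈ α, b < p → c ≤ p) ∧ 1 / 2 ≤ b + c ∧ b + c ≤ 1) ∨
      ∃ a, StraddlesGap α a := by
  have hne : (α.filter fun a => ∀ p ∈ α, a < p → 1 < p + a).Nonempty :=
    ⟨α.max' hα, Finset.mem_filter.2
      ⟨α.max'_mem hα, fun p hp hlt => absurd (α.le_max' p hp) hlt.not_ge⟩⟩
  obtain ⟨a, ha, hmin⟩ := Finset.exists_min_image _ id hne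
  obtain ⟨haα, hright⟩ := Finset.mem_filter.1 ha
  rcases (α.filter (· < a)).eq_empty_or_nonempty with hlt | hlt
  · exact Or.inr ⟨a, haα, fun p hp hpa => absurd hpa (Finset.filter_eq_empty_iff.1 hlt hp), hright⟩
  obtain ⟨b, hb, hmax⟩ := Finset.exists_max_image _ id hlt
  obtain ⟨hbα, hba⟩ := Finset.mem_filter.1 hb
  have hle_b : ∀ p ∈ α, p < a → p ≤ b := fun p hp hpa => hmax p (Finset.mem_filter.2 ⟨hp, hpa⟩)
  have ha_le : ∀ p ∈ α, b < p → a ≤ p := fun p hp hbp =>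
    not_lt.1 fun hpa => (hle_b p hp hpa).not_gt hbp
  have hsum : b + a ≤ 1 := by
    by_contra! hgt
    have hbmem : b ∈ α.filter fun a => ∀ p ∈ α, a < p → 1 < p + a :=
      Finset.mem_filter.2 ⟨hbα, fun p hp hbp => by linarith [ha_le p hp hbp]⟩
    exact (hmin b hbmem).not_gt hba
  rcases le_or_gt (1 / 2) (b + a) with hlo | hhi
  · exact Or.inl ⟨b, hbα, a, haα, hba, ha_le, hlo, hsum⟩
  · exact Or.inr ⟨a, haα, fun p hp hpa => by linarith [hle_b p hp hpa], hright⟩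

lemma CodeTree.centers_node_eq_of_image_eq {β γ : Finset ℝ} {l r : CodeTree}
    (hl : β.image (fun p => (p - 0) / (1 / 4)) = l.centers)
    (hr : γ.image (fun p => (p - 1 / 2) / (1 / 2)) = r.centers) :
    (node l r).centers = β ∪ γ := by
  have h1 : S1 ∘ (fun p => (p - 0) / (1 / 4)) = id := funext fun p => by
    simp only [Function.comp, S1, id]; ring
  have h2 : S2 ∘ (fun p => (p - 1 / 2) / (1 / 2)) = id := funext fun p => by
    simp only [Function.comp, S2, id]; ring
  rw [centers_node, ← hl, ← hr, Finset.image_image, Finset.image_image, h1, h2,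
    Finset.image_id, Finset.image_id]

namespace SelfSimilar

variable {P : Measure ℝ} [IsProbabilityMeasure P] {α : Finset ℝ}

lemma dominatedByTree_of_consecutive (hP : SelfSimilar P) {b c : ℝ} (hb : b ∈ α) (hc : c ∈ α)
    (hbc : b < c) (hnext : ∀ p ∈ α, b < p → c ≤ p) (hlo : 1 / 2 ≤ b + c) (hhi : b + c ≤ 1)
    (ih : ∀ β : Finset ℝ, β.Nonempty → β.card < α.card → DominatedByTree P β) :
    DominatedByTree P α := by
  set β := α.filter (· ≤ b)
  set γ := α.filter (¬ · ≤ b)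
  have hcard : β.card + γ.card = α.card := Finset.card_filter_add_card_filter_not _
  have hbβ : b ∈ β := Finset.mem_filter.2 ⟨hb, le_rfl⟩
  have hcγ : c ∈ γ := Finset.mem_filter.2 ⟨hc, hbc.not_ge⟩
  have hβpos := Finset.card_pos.2 ⟨b, hbβ⟩
  have hγpos := Finset.card_pos.2 ⟨c, hcγ⟩
  have hβα : affineError P β 0 (1 / 4) ≤ affineError P α 0 (1 / 4) :=
    hP.affineError_anti ⟨b, hb⟩ fun x ⟨_, hx1⟩ p hp => by
      rcases le_or_gt p b with hpb | hbp
      · exact ⟨p, Finset.mem_filter.2 ⟨hp, hpb⟩, le_rfl⟩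
      · exact ⟨b, hbβ, abs_sub_le_abs_sub_of_two_mul_le hbp.le (by linarith [hnext p hp hbp])⟩
  have hγα : affineError P γ (1 / 2) (1 / 2) ≤ affineError P α (1 / 2) (1 / 2) :=
    hP.affineError_anti ⟨b, hb⟩ fun x ⟨hx0, _⟩ p hp => by
      rcases le_or_gt p b with hpb | hbp
      · exact ⟨c, hcγ, abs_sub_le_abs_sub_of_le_two_mul (by linarith) (by linarith)⟩
      · exact ⟨p, Finset.mem_filter.2 ⟨hp, hbp.not_ge⟩, le_rfl⟩
  obtain ⟨l, hlsize, hlcost, hleq⟩ :=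
    DominatedByTree.exists_cost_le_affineError (u := 0) (v := 1 / 4) (by norm_num) <|
      ih _ (Finset.Nonempty.image ⟨b, hbβ⟩ _) (Finset.card_image_le.trans_lt (by omega))
  obtain ⟨r, hrsize, hrcost, hreq⟩ :=
    DominatedByTree.exists_cost_le_affineError (u := 1 / 2) (v := 1 / 2) (by norm_num) <|
      ih _ (Finset.Nonempty.image ⟨c, hcγ⟩ _) (Finset.card_image_le.trans_lt (by omega))
  refine ⟨.node l r, by rw [CodeTree.numLeaves, hlsize, hrsize, hcard], ?_, ?_⟩ <;>
    rw [CodeTree.cost_pieceWeight_node, hP.distortion_eq]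
  · linarith
  · intro heq
    rw [CodeTree.centers_node_eq_of_image_eq (hleq (by linarith)) (hreq (by linarith))]
    exact (Finset.filter_union_filter_not_eq _ _).symm

lemma dominatedByTree_singleton (hP : SelfSimilar P) (c : ℝ) : DominatedByTree P {c} := by
  refine ⟨.leaf, rfl, ?_, fun h => ?_⟩ <;>
    rw [CodeTree.cost_pieceWeight_leaf, hP.distortion_singleton] at *
  · linarith [sq_nonneg (2 / 3 - c)]
  · have hc : 2 / 3 - c = 0 := pow_eq_zero_iff two_ne_zero |>.1 (by linarith)
    rw [CodeTree.centers_leaf, sub_eq_zero.1 hc]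

lemma dominatedByTree_of_subset_Icc (hP : SelfSimilar P) (hne : α.Nonempty)
    (hα : ∀ p ∈ α, p ∈ Icc (0 : ℝ) 1)
    (ih : ∀ β : Finset ℝ, β.Nonempty → β.card < α.card → DominatedByTree P β) :
    DominatedByTree P α := by
  rcases (Nat.succ_le_of_lt (Finset.card_pos.2 hne)).eq_or_lt with hone | htwo
  · obtain ⟨c, rfl⟩ := Finset.card_eq_one.1 hone.symm
    exact hP.dominatedByTree_singleton c
  rcases exists_consecutive_or_straddlesGap hne with
    ⟨b, hb, c, hc, hbc, hnext, hlo, hhi⟩ | ⟨a, ha⟩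
  · exact hP.dominatedByTree_of_consecutive hb hc hbc hnext hlo hhi ih
  · exact hP.dominatedByTree_of_straddlesGap ha hα htwo ih

lemma distortion_image_projIcc_le (hP : SelfSimilar P) (hα : α.Nonempty) :
    distortion P (α.image fun p => (projIcc (0 : ℝ) 1 zero_le_one p : ℝ)) ≤ distortion P α := by
  rw [← affineError_zero_one, ← affineError_zero_one]
  refine hP.affineError_anti hα fun x hx p hp => ⟨_, Finset.mem_image_of_mem _ hp, ?_⟩
  have := abs_projIcc_sub_projIcc (h := zero_le_one (α := ℝ)) (c := x) (d := p)
  rwa [projIcc_of_mem _ hx, zero_add, one_mul] at *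

end SelfSimilar

lemma projIcc_eq_self_of_mem_Ioo {a b x : ℝ} (h : a ≤ b)
    (hx : (projIcc a b h x : ℝ) ∈ Ioo a b) : (projIcc a b h x : ℝ) = x := by
  rw [coe_projIcc] at hx ⊢
  have hmin : a < min b x := (lt_max_iff.1 hx.1).resolve_left (lt_irrefl a)
  rw [max_eq_right hmin.le] at hx ⊢
  exact min_eq_right (min_lt_iff.1 hx.2 |>.resolve_left (lt_irrefl b)).le

lemma CodeTree.centers_subset_Ioo (t : CodeTree) : ∀ p ∈ t.centers, p ∈ Ioo (0 : ℝ) 1 := by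
  intro p hp
  obtain ⟨σ, -, rfl⟩ := Finset.mem_image.1 hp
  exact Sw_two_thirds_mem_Ioo σ

namespace SelfSimilar

variable {P : Measure ℝ} [IsProbabilityMeasure P]

lemma dominatedByTree_of_image_projIcc (hP : SelfSimilar P) {α : Finset ℝ} (hα : α.Nonempty)
    (h : DominatedByTree P (α.image fun p => (projIcc (0 : ℝ) 1 zero_le_one p : ℝ))) :
    DominatedByTree P α := by
  obtain ⟨t, hsize, hle, heq⟩ := h
  have hle' := hle.trans (hP.distortion_image_projIcc_le hα)
  rcases (Finset.card_image_le (s := α)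
    (f := fun p => (projIcc (0 : ℝ) 1 zero_le_one p : ℝ))).eq_or_lt with hcard | hcard
  · refine ⟨t, hsize.trans hcard, hle', fun h => ?_⟩
    have himage := heq (le_antisymm (h ▸ hP.distortion_image_projIcc_le hα) hle)
    have hfix : ∀ p ∈ α, (projIcc (0 : ℝ) 1 zero_le_one p : ℝ) = p := fun p hp =>
      projIcc_eq_self_of_mem_Ioo _ <|
        t.centers_subset_Ioo _ (himage ▸ Finset.mem_image_of_mem _ hp)
    rw [← himage, Finset.image_congr hfix, Finset.image_id']
  · obtain ⟨s, hs, hlt⟩ := t.exists_cost_lt_of_numLeaves_lt pieceWeight_pos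
      pieceWeight_add_lt_one (hsize.trans_lt hcard)
    exact DominatedByTree.of_cost_lt hs.le (by linarith)

lemma dominatedByTree (hP : SelfSimilar P) {α : Finset ℝ} (hα : α.Nonempty) :
    DominatedByTree P α := by
  induction hn : α.card using Nat.strong_induction_on generalizing α with
  | _ n ih =>
    refine hP.dominatedByTree_of_image_projIcc hα <|
      hP.dominatedByTree_of_subset_Icc (hα.image _) ?_ fun β hβ hcard =>
        ih _ (hn ▸ hcard.trans_le Finset.card_image_le) hβ rfl
    intro p hp
    obtain ⟨q, -, rfl⟩ := Finset.mem_image.1 hp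
    exact (projIcc (0 : ℝ) 1 zero_le_one q).2

end SelfSimilar

section Optimality

variable {P : Measure ℝ} {n : ℕ}

lemma qError_le {α : Finset ℝ} (hα : α.Nonempty) (hcard : α.card ≤ n) :
    qError P n ≤ distortion P α := by
  refine csInf_le ⟨0, ?_⟩ ⟨α, hα, hcard, rfl⟩
  rintro _ ⟨β, -, -, rfl⟩
  exact affineError_zero_one P β ▸ affineError_nonneg P β 0 1

lemma le_qError {r : ℝ} (hn : 1 ≤ n)
    (h : ∀ α : Finset ℝ, α.Nonempty → α.card ≤ n → r ≤ distortion P α) : r ≤ qError P n := by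
  refine le_csInf ⟨_, {0}, Finset.singleton_nonempty 0, hn, rfl⟩ ?_
  rintro _ ⟨α, hα, hcard, rfl⟩
  exact h α hα hcard

variable [IsProbabilityMeasure P]

lemma SelfSimilar.qError_numLeaves_le (hP : SelfSimilar P) (t : CodeTree) :
    qError P t.numLeaves ≤ t.cost pieceWeight * (16 / 153) :=
  (qError_le t.centers_nonempty t.card_centers_le).trans (hP.distortion_centers_le t)

lemma IsOptimal.exists_codeTree {α : Finset ℝ} (hα : IsOptimal P n α) (hP : SelfSimilar P) :
    ∃ t : CodeTree, t.numLeaves = n ∧ α = t.centers ∧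
      ∀ s : CodeTree, s.numLeaves = n → t.cost pieceWeight ≤ s.cost pieceWeight := by
  obtain ⟨hne, hcard, hopt⟩ := hα
  obtain ⟨t, hsize, hle, heq⟩ := hP.dominatedByTree hne
  have hmin (s : CodeTree) (hs : s.numLeaves = n) :
      distortion P α ≤ s.cost pieceWeight * (16 / 153) :=
    hopt ▸ hs ▸ hP.qError_numLeaves_le s
  have hn : t.numLeaves = n := by
    refine (hsize.trans_le hcard).eq_of_not_lt fun hlt => ?_
    obtain ⟨s, hs, hst⟩ :=
      t.exists_cost_lt_of_numLeaves_lt pieceWeight_pos pieceWeight_add_lt_one hlt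
    linarith [hmin s hs]
  exact ⟨t, hn, heq ((hmin t hn).antisymm hle), fun s hs => by linarith [hmin s hs]⟩

lemma SelfSimilar.isOptimal_centers (hP : SelfSimilar P) {t : CodeTree} (ht : t.numLeaves = n)
    (hmin : ∀ s : CodeTree, s.numLeaves = n → t.cost pieceWeight ≤ s.cost pieceWeight) :
    IsOptimal P n t.centers := by
  have hcard : t.centers.card ≤ n := ht ▸ t.card_centers_le
  refine ⟨t.centers_nonempty, hcard, le_antisymm ?_ (qError_le t.centers_nonempty hcard)⟩
  refine (hP.distortion_centers_le t).trans (le_qError (ht ▸ t.numLeaves_pos) fun α hα hαn => ?_)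
  obtain ⟨s, hsize, hle, -⟩ := hP.dominatedByTree hα
  obtain ⟨s', hs', hcost⟩ := s.exists_cost_le_of_numLeaves_le pieceWeight_pos
    pieceWeight_add_lt_one (hsize.trans_le hαn)
  linarith [hmin s' hs']

end Optimality

lemma CodeTree.mem_words_iff (t : CodeTree) {σ : List (Fin 2)} :
    σ ∈ t.words ↔ Sw σ (2 / 3) ∈ t.centers :=
  (Sw_two_thirds_injective.mem_finset_image).symm

theorem stmt_19 (P : Measure ℝ) [IsProbabilityMeasure P] (hP : SelfSimilar P)
    (n : ℕ) (hn : 2 ≤ n) (α : Finset ℝ) (hα : IsOptimal P n α)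
    (O : Finset (List (Fin 2))) (hO : ∀ σ : List (Fin 2), σ ∈ O ↔ Sw σ (2 / 3) ∈ α)
    (τ : List (Fin 2)) (hτ : τ ∈ O) (hmax : ∀ σ ∈ O, qnt P σ ≤ qnt P τ) :
    IsOptimal P (n + 1)
      (((O.erase τ).image (fun σ => Sw σ (2 / 3))) ∪
        ({Sw (τ ++ [0]) (2 / 3), Sw (τ ++ [1]) (2 / 3)} : Finset ℝ)) := by
  obtain ⟨t, htn, rfl, htmin⟩ := hα.exists_codeTree hP
  obtain rfl : O = t.words := Finset.ext fun σ => (hO σ).trans t.mem_words_iff.symm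
  obtain ⟨t', hsize, hcost, hwords⟩ := t.exists_split_leaf pieceWeight hτ
  have hcenters : (t.words.erase τ).image (fun σ => Sw σ (2 / 3)) ∪
      {Sw (τ ++ [0]) (2 / 3), Sw (τ ++ [1]) (2 / 3)} = t'.centers := by
    rw [CodeTree.centers, hwords, Finset.image_union, Finset.image_insert, Finset.image_singleton]
  have hweight : ∀ σ ∈ t.words, (σ.map pieceWeight).prod ≤ (τ.map pieceWeight).prod :=
    fun σ hσ => by simpa only [hP.qnt_eq_prod] using hmax σ hσ
  rw [hcenters]
  refine hP.isOptimal_centers (by omega) fun s hs => ?_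
  rw [hcost]
  exact CodeTree.cost_sub_le_of_forall_cost_le pieceWeight_pos pieceWeight_add_lt_one.le
    (fun s hs => htmin s (hs.trans htn)) hweight (by omega)
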